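/- arXiv:1009.0870 — 4 statements merged into one kernel-verified Lean document; each statement's English description precedes it below -/
import Mathlib

section
/- Let (Q(k))_{k≥0} be a sequence of nonnegative reals satisfying Q(k+1) = max(Q(k) + A(k) − b(k), 0), where for every k: 0 ≤ A(k) ≤ A_max, b(k) ≥ b_min ≥ 0, and A(k) = 0 whenever Q(k) > T for a fixed threshold T > 0. If Q(0) ≤ T + A_max − b_min, then Q(k) ≤ T + A_max − b_min for all k ≥ 0. In particular, the overdraft queue of the online advertising algorithm with parameter ε > 0 (where T = 1/ε, A_max = N·max_{q,s} r_{qi} c_{qis}, b_min = ⌊b_i⌋) satisfies Q_i(k) ≤ 1/ε + N·max_{q,s} r_{qi} c_{qis} − ⌊b_i⌋ for all k. -/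
open Finset

/-- The bound `T + Amax - bmin` is an invariant of the recursion: a step from `Q k ≤ T` adds at
most `Amax - bmin`, and a step from above `T` has no arrivals, so the queue cannot grow. The
truncation at `0` is harmless because the bound dominates `Q 0 ≥ 0`. -/
theorem throttled_queue_le (Q A b : ℕ → ℝ) (Amax bmin T : ℝ)
    (hrec : ∀ k, Q (k + 1) = max (Q k + A k - b k) 0)
    (hQnn : ∀ k, 0 ≤ Q k)
    (hA : ∀ k, A k ≤ Amax)
    (hb : ∀ k, bmin ≤ b k) (hbmin : 0 ≤ bmin)
    (hthrottle : ∀ k, T < Q k → A k = 0)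
    (hQ0 : Q 0 ≤ T + Amax - bmin) (k : ℕ) :
    Q k ≤ T + Amax - bmin := by
  induction k with
  | zero => exact hQ0
  | succ k ih =>
    rw [hrec k]
    refine max_le ?_ ((hQnn 0).trans hQ0)
    rcases le_or_gt (Q k) T with h | h
    · linarith [hA k, hb k]
    · linarith [hthrottle k h, hb k]

/-- A queue `Q (k+1) = max (Q k + A k - b k) 0` whose arrivals are throttled to `0`
whenever `Q k > T`, with arrivals bounded by `Amax` and departures at least `bmin ≥ 0`,
stays below `T + Amax - bmin` forever (if it starts there).  In particular, the overdraft
queue of the online advertising algorithm with parameter `ε > 0` (threshold `T = 1/ε`,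
`Amax = N·max_{q,s} r_{qi} c_{qis}`, `bmin = ⌊b_i⌋`) satisfies
`Q_i(k) ≤ 1/ε + N·max_{q,s} r_{qi} c_{qis} - ⌊b_i⌋` for all `k`. -/
theorem stmt_3 {K S : Type*} [Fintype K] [Fintype S] [Nonempty K] [Nonempty S]
    (Q A b : ℕ → ℝ) (Amax bmin T : ℝ)
    (hrec : ∀ k, Q (k + 1) = max (Q k + A k - b k) 0)
    (hQnn : ∀ k, 0 ≤ Q k)
    (hA : ∀ k, 0 ≤ A k ∧ A k ≤ Amax)
    (hb : ∀ k, bmin ≤ b k) (hbmin : 0 ≤ bmin)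
    (hT : 0 < T)
    (hthrottle : ∀ k, T < Q k → A k = 0)
    (hQ0 : Q 0 ≤ T + Amax - bmin) :
    (∀ k, Q k ≤ T + Amax - bmin) ∧
    (∀ (ε : ℝ), 0 < ε → ∀ (N : ℕ) (r : K → ℝ) (c : K → S → ℝ) (bi : ℝ)
      (Q' A' b' : ℕ → ℝ),
      (∀ k, Q' (k + 1) = max (Q' k + A' k - b' k) 0) →
      (∀ k, 0 ≤ Q' k) →
      (∀ k, 0 ≤ A' k ∧
        A' k ≤ (N : ℝ) * (univ : Finset (K × S)).sup' univ_nonempty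
          (fun x => r x.1 * c x.1 x.2)) →
      (∀ k, (⌊bi⌋ : ℝ) ≤ b' k) → (0 : ℝ) ≤ (⌊bi⌋ : ℝ) →
      (∀ k, 1 / ε < Q' k → A' k = 0) →
      Q' 0 ≤ 1 / ε + (N : ℝ) * (univ : Finset (K × S)).sup' univ_nonempty
          (fun x => r x.1 * c x.1 x.2) - (⌊bi⌋ : ℝ) →
      ∀ k, Q' k ≤ 1 / ε + (N : ℝ) * (univ : Finset (K × S)).sup' univ_nonempty
          (fun x => r x.1 * c x.1 x.2) - (⌊bi⌋ : ℝ)) := by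
  refine ⟨throttled_queue_le Q A b Amax bmin T hrec hQnn (fun k => (hA k).2) hb hbmin
    hthrottle hQ0, ?_⟩
  intro ε _ N r c bi Q' A' b' hrec' hQnn' hA' hb' hbi hthrottle' hQ0'
  exact throttled_queue_le Q' A' b' _ _ _ hrec' hQnn' (fun k => (hA' k).2) hb' hbi
    hthrottle' hQ0'
end

section
/- Consider a single stationary queue Q(k+1) = Q(k) + A(k) − b̂(k), where b̂(k) = b̃(k) if Q(k) + A(k) − b̃(k) ≥ 0 and b̂(k) = Q(k) + A(k) otherwise (equivalently Q(k+1) = max(Q(k) + A(k) − b̃(k), 0)), A(k) ≥ 0 is the revenue collected in budgeting cycle k under a stationary ad-assignment algorithm, and b̃(k) are i.i.d. nonnegative-integer-valued budgets with mean b > 0, independent of the arrival process. Assume: (i) the process is stationary with finite mean queue length Q̄ = E[Q(k)]; (ii) A(k) = 0 whenever no query arrives in cycle k, the events {no query arrival in cycle k} are independent across cycles and independent of the budgets and of Q(0), with φ := Pr(no query arrival in a budgeting cycle) > 0; (iii) P₊ := Pr(b̃(k) > 0) > 0. Then for any ε > 0, if E[A(k)] ≥ b − ε in steady state, the mean queue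 length satisfies Q̄ ≥ log(1/ε) / (2(1 − log(φ P₊))) − 1. -/
open MeasureTheory ProbabilityTheory

/-!
Write `b̂ k = min (b̃ k) (Q k + A k) = Q k + A k - Q (k + 1)` for the actual departure. Since
`E[Q k]` does not depend on `k`, `E[b̂ k] = E[A k] ≥ b - ε`, so the wasted budget
`X k = b̃ k - b̂ k ≥ 0` has mean at most `ε`, and by Markov's inequality `P(X k ≥ 1) ≤ ε`.

Conversely, put `T = ⌊2 Q̄⌋ + 1`. By Markov's inequality `P(Q 0 < T) ≥ 1 / 2`. If moreover no query
arrives and the budget is positive in each of the cycles `0, …, T`, then the integrality of the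
budgets makes the queue fall by at least one per cycle until it is empty (`queue_le_of_drain`), so
it is empty at time `T` and the whole budget of cycle `T`, which is at least one, is wasted. By
independence (`measureReal_drain`) this gives `(φ P₊) ^ (T + 1) / 2 ≤ P(X T ≥ 1) ≤ ε`. As
`T + 1 ≤ 2 Q̄ + 2` and `log 2 ≤ 2`, taking logarithms yields the bound (`log_bound`).
-/

/-- Along a run of cycles with no revenue and a budget of at least one, the queue falls by at least
one per cycle until it is empty. -/
lemma queue_le_of_drain (q a : ℕ → ℝ) (β : ℕ → ℕ) (T : ℕ)
    (hrec : ∀ k, q (k + 1) = max (q k + a k - β k) 0)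
    (h0 : q 0 ≤ T) (ha : ∀ k < T, a k = 0) (hβ : ∀ k < T, 0 < β k) :
    ∀ k ≤ T, q k ≤ (T : ℝ) - k := by
  intro k
  induction k with
  | zero => intro _; simpa using h0
  | succ k ih =>
    intro hk
    have h1 := ih (by omega)
    have h2 : (1 : ℝ) ≤ β k := by exact_mod_cast hβ k (by omega)
    have h3 : ((k + 1 : ℕ) : ℝ) ≤ T := by exact_mod_cast hk
    rw [hrec, ha k (by omega)]
    push_cast at h3 ⊢
    exact max_le (by linarith) (by linarith)

/-- By independence, the probability that the initial queue is below `c` and that each of the cycles `0, …, n - 1` has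
no query and a positive budget factorizes. -/
lemma measureReal_drain {Ω : Type*} [MeasurableSpace Ω] (μ : Measure Ω)
    (Q0 : Ω → ℝ) (btil : ℕ → Ω → ℕ) (Nset : ℕ → Set Ω) (φ Pplus : ℝ)
    (hφ : ∀ k, (μ (Nset k)).toReal = φ)
    (hP : ∀ k, (μ {ω | 0 < btil k ω}).toReal = Pplus)
    {m : (ℕ × Bool) ⊕ Unit → MeasurableSpace Ω} (hindep : iIndep m μ)
    (hmN : ∀ k, MeasurableSet[m (Sum.inl (k, true))] (Nset k))
    (hmB : ∀ k, MeasurableSet[m (Sum.inl (k, false))] {ω | 0 < btil k ω})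
    (n : ℕ) (c : ℝ)
    (hmQ : MeasurableSet[m (Sum.inr ())] {ω | Q0 ω < c}) :
    μ.real {ω | Q0 ω < c ∧ ∀ k < n, ω ∈ Nset k ∧ 0 < btil k ω} =
      (φ * Pplus) ^ n * μ.real {ω | Q0 ω < c} := by
  let f : (ℕ × Bool) ⊕ Unit → Set Ω :=
    Sum.elim (fun p => bif p.2 then Nset p.1 else {ω | 0 < btil p.1 ω}) (fun _ => {ω | Q0 ω < c})
  let s : Finset ((ℕ × Bool) ⊕ Unit) :=
    (Finset.range n ×ˢ (Finset.univ : Finset Bool)).disjSum Finset.univ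
  have key := hindep.meas_biInter (S := s) (s := f) (by
    rintro (⟨k, _ | _⟩ | u) _
    · exact hmB k
    · exact hmN k
    · exact hmQ)
  have hset : {ω | Q0 ω < c ∧ ∀ k < n, ω ∈ Nset k ∧ 0 < btil k ω} = ⋂ i ∈ s, f i := by
    ext ω
    simp only [Set.mem_ofPred_eq, Set.mem_iInter]
    constructor
    · rintro ⟨h1, h2⟩ (⟨k, _ | _⟩ | u) hi
      · exact (h2 k (by simpa [s] using hi)).2
      · exact (h2 k (by simpa [s] using hi)).1
      · exact h1
    · intro h
      exact ⟨h (Sum.inr ()) (by simp [s]), fun k hk =>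
        ⟨h (Sum.inl (k, true)) (by simpa [s] using hk),
          h (Sum.inl (k, false)) (by simpa [s] using hk)⟩⟩
  rw [hset, Measure.real, key, ENNReal.toReal_prod, Finset.prod_disjSum, Finset.prod_product]
  simp [f, hφ, hP, Measure.real]

/-- The final estimate: `p ^ n / 2 ≤ ε` with `n ≤ 2 q + 2` bounds `q` from below. -/
lemma log_bound {p ε q : ℝ} {n : ℕ} (hp : 0 < p) (hp1 : p ≤ 1) (hq : 0 ≤ q)
    (hn : (n : ℝ) ≤ 2 * q + 2) (h : p ^ n * (1 / 2) ≤ ε) :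
    Real.log (1 / ε) / (2 * (1 - Real.log p)) - 1 ≤ q := by
  have hL : Real.log p ≤ 0 := Real.log_nonpos hp.le hp1
  have h1 := Real.log_le_log (by positivity) h
  rw [Real.log_mul (by positivity) (by norm_num), Real.log_pow, one_div, Real.log_inv] at h1
  have h2 : Real.log 2 ≤ 1 := by linarith [Real.log_two_lt_d9]
  have h3 : (2 * q + 2) * Real.log p ≤ n * Real.log p := mul_le_mul_of_nonpos_right hn hL
  rw [sub_le_iff_le_add, div_le_iff₀ (by linarith), one_div, Real.log_inv]
  nlinarith

/-- Universal lower bound on the mean overdraft level, single queue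
(one keyword, one client, one webpage slot).  For the stationary queue
`Q (k+1) = max (Q k + A k - b̃ k) 0` with i.i.d. nonnegative-integer budgets `b̃ k` of mean
`b > 0` independent of the arrivals, no-query events of probability `φ > 0` (on which
`A k = 0`) independent across cycles and of the budgets and `Q 0`, and
`P₊ = Pr(b̃ k > 0) > 0`: if the achieved revenue satisfies `E[A k] ≥ b - ε` in steady
state, then the stationary mean queue length satisfies
`Q̄ ≥ log(1/ε) / (2(1 - log(φP₊))) - 1`. -/
theorem stmt_5 {Ω : Type*} [MeasurableSpace Ω] (μ : Measure Ω) [IsProbabilityMeasure μ]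
    (Q A : ℕ → Ω → ℝ) (btil : ℕ → Ω → ℕ) (Nset : ℕ → Set Ω)
    (φ Pplus Qbar b ε : ℝ) (hε : 0 < ε) (hb : 0 < b)
    (hrec : ∀ k ω, Q (k + 1) ω = max (Q k ω + A k ω - btil k ω) 0)
    (hQnn : ∀ k ω, 0 ≤ Q k ω)
    (hQmeas : ∀ k, Measurable (Q k))
    (hAnn : ∀ k ω, 0 ≤ A k ω)
    (hAmeas : ∀ k, Measurable (A k))
    (hAint : ∀ k, Integrable (A k) μ)
    (hAzero : ∀ k, ∀ ω ∈ Nset k, A k ω = 0)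
    (hNmeas : ∀ k, MeasurableSet (Nset k))
    (hbmeas : ∀ k, Measurable (btil k))
    (hbint : ∀ k, Integrable (fun ω => (btil k ω : ℝ)) μ)
    (hbmean : ∀ k, (∫ ω, (btil k ω : ℝ) ∂μ) = b)
    (hφ : ∀ k, (μ (Nset k)).toReal = φ) (hφpos : 0 < φ)
    (hP : ∀ k, (μ {ω | 0 < btil k ω}).toReal = Pplus) (hPpos : 0 < Pplus)
    (hindep : iIndep
      (fun x : (ℕ × Bool) ⊕ Unit =>
        match x with
        | Sum.inl (k, true) => MeasurableSpace.generateFrom {Nset k}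
        | Sum.inl (k, false) => MeasurableSpace.comap (btil k) inferInstance
        | Sum.inr _ => MeasurableSpace.comap (Q 0) inferInstance) μ)
    (hstat : ∀ k, Integrable (Q k) μ ∧ (∫ ω, Q k ω ∂μ) = Qbar)
    (hstatp0 : ∀ k j,
      (μ {ω | min ((btil k ω : ℝ)) (Q k ω + A k ω) = 0 ∧ 0 < btil k ω}).toReal =
      (μ {ω | min ((btil j ω : ℝ)) (Q j ω + A j ω) = 0 ∧ 0 < btil j ω}).toReal)
    (hrev : ∀ k, b - ε ≤ ∫ ω, A k ω ∂μ) :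
    Real.log (1 / ε) / (2 * (1 - Real.log (φ * Pplus))) - 1 ≤ Qbar := by
  have hQbar : 0 ≤ Qbar := by
    rw [← (hstat 0).2]; exact integral_nonneg (hQnn 0)
  have hP1 : φ * Pplus ≤ 1 := by
    rw [← hφ 0, ← hP 0]
    exact mul_le_one₀ measureReal_le_one measureReal_nonneg measureReal_le_one
  -- A strictly positive threshold, so that Markov's inequality also covers `Qbar = 0`.
  obtain ⟨T, hT⟩ : ∃ T : ℕ, T = ⌊2 * Qbar⌋₊ + 1 := ⟨_, rfl⟩
  have hTl : 2 * Qbar ≤ T := by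
    rw [hT]; push_cast; exact (Nat.lt_floor_add_one _).le
  have hTu : (T : ℝ) ≤ 2 * Qbar + 1 := by
    rw [hT]; push_cast; linarith [Nat.floor_le (show 0 ≤ 2 * Qbar by linarith)]
  have hTpos : (0 : ℝ) < T := by rw [hT]; positivity
  have hhalf : 1 / 2 ≤ μ.real {ω | Q 0 ω < T} := by
    have h1 := mul_meas_ge_le_integral_of_nonneg (μ := μ)
      (Filter.Eventually.of_forall (hQnn 0)) (hstat 0).1 (T : ℝ)
    have h2 : μ.real {ω | (T : ℝ) ≤ Q 0 ω} = 1 - μ.real {ω | Q 0 ω < T} := by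
      rw [← probReal_compl_eq_one_sub (measurableSet_lt (hQmeas 0) measurable_const)]
      congr 1; ext ω; simp
    rw [(hstat 0).2, h2] at h1
    by_contra! hlt
    nlinarith
  -- The wasted budget of cycle `T`, with the departure written as `Q T + A T - Q (T + 1)`.
  let X : Ω → ℝ := fun ω => btil T ω - (Q T ω + A T ω - Q (T + 1) ω)
  have hQA : Integrable (fun ω => Q T ω + A T ω) μ := (hstat T).1.add (hAint T)
  have hdep : Integrable (fun ω => Q T ω + A T ω - Q (T + 1) ω) μ := hQA.sub (hstat (T + 1)).1
  have hXint : Integrable X μ := (hbint T).sub hdep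
  have hXnn : ∀ ω, 0 ≤ X ω := by
    intro ω
    have := le_max_left (Q T ω + A T ω - btil T ω) 0
    rw [← hrec] at this
    simp only [X]; linarith
  have hXmean : ∫ ω, X ω ∂μ ≤ ε := by
    simp only [X]
    rw [integral_sub (hbint T) hdep, integral_sub hQA (hstat (T + 1)).1,
      integral_add (hstat T).1 (hAint T), (hstat T).2, (hstat (T + 1)).2, hbmean]
    linarith [hrev T]
  have hmarkov := mul_meas_ge_le_integral_of_nonneg (Filter.Eventually.of_forall hXnn) hXint 1
  have hsub : {ω | Q 0 ω < T ∧ ∀ k < T + 1, ω ∈ Nset k ∧ 0 < btil k ω} ⊆ {ω | 1 ≤ X ω} := by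
    rintro ω ⟨h0, h⟩
    have hQT := queue_le_of_drain (fun k => Q k ω) (fun k => A k ω) (fun k => btil k ω) T
      (fun k => hrec k ω) h0.le (fun k hk => hAzero k ω (h k (by omega)).1)
      (fun k hk => (h k (by omega)).2) T le_rfl
    have hA := hAzero T ω (h T (by omega)).1
    have hB : (1 : ℝ) ≤ btil T ω := by exact_mod_cast (h T (by omega)).2
    have hQ1 := hQnn (T + 1) ω
    simp only [Set.mem_ofPred_eq, X]
    linarith
  have hdrain := measureReal_mono (μ := μ) hsub
  rw [measureReal_drain μ (Q 0) btil Nset φ Pplus hφ hP hindep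
    (fun k => MeasurableSpace.measurableSet_generateFrom rfl)
    (fun k => ⟨Set.Ioi 0, measurableSet_Ioi, rfl⟩) (T + 1) T
    ⟨Set.Iio (T : ℝ), measurableSet_Iio, rfl⟩] at hdrain
  refine log_bound (n := T + 1) (mul_pos hφpos hPpos) hP1 hQbar
    (by push_cast; linarith) ?_
  calc (φ * Pplus) ^ (T + 1) * (1 / 2)
      ≤ (φ * Pplus) ^ (T + 1) * μ.real {ω | Q 0 ω < T} := by gcongr
    _ ≤ ε := by linarith
end

section
/- Let C = {λ ∈ ℝ^M : λ ≥ 0 and Σ_{i=1}^M h_i^{(n)} λ_i ≤ d^{(n)} for all n = 1,…,L} be a nonempty compact polytope with h_i^{(n)} ≥ 0 and d^{(n)} > 0 for all i, n, and let R* = max_{λ∈C} Σ_i λ_i. Then for every ε > 0 and every λ ∈ C with R* − Σ_i λ_i ≤ ε, there exists an index ñ ∈ {1,…,L} such that d^{(ñ)} − Σ_i h_i^{(ñ)} λ_i ≤ ε · max_i h_i^{(ñ)}. -/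
/-!
If every constraint had slack larger than `ε · max_i h_i^{(n)}`, then, there being finitely many
constraints, some step `t > ε` still satisfies `Σ_i h_i^{(n)} λ_i + t · max_i h_i^{(n)} < d^{(n)}`
for all `n`. Raising a single coordinate of `λ` by `t` stays in `C` and raises the total to
`Σ_i λ_i + t > R*`, contradicting the maximality of `R*`.
-/

open Finset

/-- If `C = {λ ≥ 0 : Σ_i h_i^{(n)} λ_i ≤ d^{(n)}, 1 ≤ n ≤ L}` is a nonempty compact polytope
with `h ≥ 0`, `d > 0`, and `R* = max_{λ∈C} Σ_i λ_i`, then any `λ ∈ C` with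
`R* - Σ_i λ_i ≤ ε` nearly saturates some constraint:
`d^{(ñ)} - Σ_i h_i^{(ñ)} λ_i ≤ ε · max_i h_i^{(ñ)}` for some `ñ`. -/
theorem stmt_8 {ι : Type*} [Fintype ι] [Nonempty ι] {L : ℕ} (hL : 0 < L)
    (h : Fin L → ι → ℝ) (d : Fin L → ℝ)
    (hh : ∀ n i, 0 ≤ h n i) (hd : ∀ n, 0 < d n)
    (C : Set (ι → ℝ))
    (hC : C = {l : ι → ℝ | (∀ i, 0 ≤ l i) ∧ ∀ n : Fin L, ∑ i, h n i * l i ≤ d n})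
    (hCcpt : IsCompact C) (hCne : C.Nonempty)
    (Rstar : ℝ) (hR : IsGreatest ((fun l : ι → ℝ => ∑ i, l i) '' C) Rstar) :
    ∀ ε : ℝ, 0 < ε → ∀ l ∈ C, Rstar - ∑ i, l i ≤ ε →
      ∃ n : Fin L, d n - ∑ i, h n i * l i ≤ ε * (univ.sup' univ_nonempty fun i => h n i) := by
  classical
  intro ε hε l hl hle
  by_contra! hcon
  subst hC
  obtain ⟨hl0, hld⟩ := hl
  have hnear : ∀ᶠ t in nhds ε, ∀ n : Fin L,
      t * (univ.sup' univ_nonempty fun i => h n i) < d n - ∑ i, h n i * l i := by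
    rw [Filter.eventually_all]
    intro n
    exact (continuous_id.mul continuous_const).continuousAt.eventually_lt_const (hcon n)
  obtain ⟨t, ht, hεt⟩ :=
    ((hnear.filter_mono nhdsWithin_le_nhds).and
      (self_mem_nhdsWithin : Set.Ioi ε ∈ nhdsWithin ε (Set.Ioi ε))).exists
  have hεt' : ε < t := hεt
  obtain ⟨i₀⟩ := ‹Nonempty ι›
  have hmem : (l + Pi.single i₀ t) ∈
      {l : ι → ℝ | (∀ i, 0 ≤ l i) ∧ ∀ n : Fin L, ∑ i, h n i * l i ≤ d n} := by
    refine ⟨fun i => ?_, fun n => ?_⟩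
    · have hs : (0 : ι → ℝ) ≤ Pi.single i₀ t := Pi.single_nonneg.2 (hε.trans hεt').le
      exact add_nonneg (hl0 i) (hs i)
    · have hsum : ∑ i, h n i * (l + Pi.single i₀ t : ι → ℝ) i = ∑ i, h n i * l i + h n i₀ * t := by
        simp [mul_add, Finset.sum_add_distrib, Pi.single_apply]
      have hmax : h n i₀ ≤ univ.sup' ⟨i₀, mem_univ i₀⟩ fun i => h n i :=
        le_sup' (fun i => h n i) (mem_univ i₀)
      have hstep := mul_le_mul_of_nonneg_left hmax (hε.trans hεt').le
      rw [hsum]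
      linarith [ht n, mul_comm t (h n i₀)]
  have hbound := hR.2 ⟨_, hmem, rfl⟩
  have htotal : ∑ i, (l + Pi.single i₀ t : ι → ℝ) i = ∑ i, l i + t := by
    simp [Finset.sum_add_distrib]
  simp only [htotal] at hbound
  linarith
end

section
/- Let (Q(k))_{k≥0} be a real-valued sequence satisfying Q(k+1) = max(Q(k) + A(k) − b̃(k), −C), where for every k: 0 ≤ A(k) ≤ A_max := N·max_{q,s} r_q c_{qs}, b̃(k) ≥ ⌊b⌋ ≥ 0, C ≥ 0, and A(k) = 0 whenever Q(k) > Γ, with throttling threshold Γ := min(⌊b⌋ − A_max, 0). If Q(0) ≤ 0, then Q(k) ≤ 0 for all k ≥ 0; that is, the modified online algorithm with this choice of Γ never incurs an overdraft. -/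
open Finset

/-- Underdraft mechanism: with the throttling threshold `Γ = [⌊b⌋ - A_max]⁻ = min (⌊b⌋ - A_max) 0`,
where `A_max = N·max_{q,s} r_q c_{qs}`, the modified queue
`Q (k+1) = max (Q k + A k - b̃ k) (-C)` (arrivals `0 ≤ A k ≤ A_max`, throttled to `0` when
`Q k > Γ`, departures `b̃ k ≥ ⌊b⌋ ≥ 0`, credit cap `C ≥ 0`) never becomes positive:
if `Q 0 ≤ 0` then `Q k ≤ 0` for all `k`, i.e. no overdraft ever occurs. -/
theorem stmt_17 {K S : Type*} [Fintype K] [Fintype S] [Nonempty K] [Nonempty S]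
    (N : ℕ) (r : K → ℝ) (c : K → S → ℝ) (b C : ℝ) (hC : 0 ≤ C)
    (Q A btil : ℕ → ℝ)
    (hrec : ∀ k, Q (k + 1) = max (Q k + A k - btil k) (-C))
    (hA : ∀ k, 0 ≤ A k ∧
      A k ≤ (N : ℝ) * (univ : Finset (K × S)).sup' univ_nonempty
        (fun x => r x.1 * c x.1 x.2))
    (hbfloor : (0 : ℝ) ≤ (⌊b⌋ : ℝ))
    (hbtil : ∀ k, (⌊b⌋ : ℝ) ≤ btil k)
    (hthrottle : ∀ k,
      min ((⌊b⌋ : ℝ) - (N : ℝ) * (univ : Finset (K × S)).sup' univ_nonempty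
        (fun x => r x.1 * c x.1 x.2)) 0 < Q k → A k = 0)
    (hQ0 : Q 0 ≤ 0) :
    ∀ k, Q k ≤ 0 := by
  intro k
  induction k with
  | zero => exact hQ0
  | succ k ih =>
    rw [hrec k]
    refine max_le ?_ (by linarith)
    -- Above the threshold there is no charge; below it, one cycle's net increase,
    -- at most `A_max - ⌊b⌋`, cannot bring the queue above `0`.
    rcases lt_or_ge (min ((⌊b⌋ : ℝ) - (N : ℝ) * (univ : Finset (K × S)).sup' univ_nonempty
        (fun x => r x.1 * c x.1 x.2)) 0) (Q k) with h | h
    · linarith [hthrottle k h, hbtil k]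
    · linarith [h.trans (min_le_left _ _), (hA k).2, hbtil k]
end
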